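/- Let β > 0 and let ρ be the logistic loss with parameter β, ρ(t) = β² log(cosh(t/β)). Fix b ≥ 0 and σ ∈ ℝ, and define ψ(s) = ρ((s − b)/√(s + σ²)) for s > −σ². Then there exists S such that for all s > S, ψ is twice differentiable at s and ψ″(s) < 0; in particular ψ is not convex on any interval of the form (S, ∞). -/

import Mathlib

/-!
Put `u(s) = (s - b) / √(s + v)` with `v = σ²`, so that `ψ = ρ ∘ u` and
`ψ'' = ρ''(u) u'² + ρ'(u) u''`. As `s → ∞`, `u ∼ √s`, `u' ∼ 1 / (2 √s)` and `u'' ∼ -1 / (4 √s³)`.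
Hence, if `ρ'` tends to a limit `L > 0` and `t ρ''(t) → 0`, the first term is `o(√s⁻³)`, while the
second is `∼ -L / (4 √s³)` and decides the sign of `ψ''`. The logistic loss has
`ρ'(t) = β tanh (t / β) → β` and `ρ''(t) = 1 / cosh² (t / β)`.
-/

open Filter Set Topology

theorem deriv_deriv_nonneg_of_convexOn {D : Set ℝ} {f : ℝ → ℝ} {x : ℝ} (hf : ConvexOn ℝ D f)
    (hD : D ∈ 𝓝 x) (hd : ∀ᶠ y in 𝓝 x, DifferentiableAt ℝ f y) : 0 ≤ deriv (deriv f) x := by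
  obtain ⟨ε, hε, hball⟩ := Metric.mem_nhds_iff.1 (inter_mem hD hd)
  have hmono : MonotoneOn (deriv f) (Metric.ball x ε) :=
    (hf.subset (hball.trans inter_subset_left) (convex_ball x ε)).monotoneOn_deriv
      fun y hy => (hball hy).2
  rw [← derivWithin_of_isOpen Metric.isOpen_ball (Metric.mem_ball_self hε)]
  exact hmono.derivWithin_nonneg

theorem deriv_deriv_comp {𝕜 : Type*} [NontriviallyNormedField 𝕜] {g f : 𝕜 → 𝕜} {x : 𝕜}
    (hg : ContDiffAt 𝕜 2 g (f x)) (hf : ContDiffAt 𝕜 2 f x) :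
    deriv (deriv (g ∘ f)) x =
      deriv (deriv g) (f x) * deriv f x ^ 2 + deriv g (f x) * deriv (deriv f) x := by
  simpa only [iteratedDeriv_succ, iteratedDeriv_zero] using iteratedDeriv_comp_two hg hf

theorem tendsto_add_div_add_atTop_nhds_one (p q : ℝ) :
    Tendsto (fun s => (s + p) / (s + q)) atTop (𝓝 1) := by
  have hdiff : Tendsto (fun s => 1 + (p - q) / (s + q)) atTop (𝓝 (1 + 0)) :=
    tendsto_const_nhds.add ((tendsto_atTop_add_const_right _ q tendsto_id).const_div_atTop _)
  rw [add_zero] at hdiff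
  refine hdiff.congr' ?_
  filter_upwards [eventually_gt_atTop (-q)] with s hs
  have : s + q ≠ 0 := by linarith
  field_simp
  ring

/-- The residual `(s - b) / √(s + v)` of a datum `b` whose mean is `s` and whose variance `s + v`
combines Poisson noise with Gaussian noise of variance `v = σ²`. -/
noncomputable def standardizedResidual (b v s : ℝ) : ℝ :=
  (s - b) / √(s + v)

/-- The robust scalar fidelity `ψ(s) = ρ((s - b) / √(s + v))` of a loss `ρ`, with the noise
parameter entering through `v = σ²`. -/
noncomputable def robustFidelity (ρ : ℝ → ℝ) (b v : ℝ) : ℝ → ℝ :=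
  ρ ∘ standardizedResidual b v

/-- The logistic loss `ρ(t) = β² log (cosh (t / β))`. -/
noncomputable def logisticLoss (β t : ℝ) : ℝ :=
  β ^ 2 * Real.log (Real.cosh (t / β))

section StandardizedResidual

variable {b v s : ℝ}

theorem contDiffAt_standardizedResidual {n : WithTop ℕ∞} (hs : -v < s) :
    ContDiffAt ℝ n (standardizedResidual b v) s := by
  have hsv : 0 < s + v := by linarith
  exact (contDiffAt_id.sub contDiffAt_const).div
    ((contDiffAt_id.add contDiffAt_const).sqrt hsv.ne') (Real.sqrt_pos.2 hsv).ne'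

theorem hasDerivAt_sqrt_add_const (hs : -v < s) :
    HasDerivAt (fun s => √(s + v)) (1 / (2 * √(s + v))) s :=
  ((hasDerivAt_id' s).add_const v).sqrt (by linarith)

theorem deriv_standardizedResidual (hs : -v < s) :
    deriv (standardizedResidual b v) s = (s + b + 2 * v) / (2 * √(s + v) ^ 3) := by
  have hr : 0 < √(s + v) := Real.sqrt_pos.2 (by linarith)
  have hr2 : √(s + v) ^ 2 = s + v := Real.sq_sqrt (by linarith)
  refine (((hasDerivAt_id' s).sub_const b).div (hasDerivAt_sqrt_add_const hs) hr.ne').deriv.trans ?_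
  field_simp
  rw [hr2]
  ring

theorem deriv_deriv_standardizedResidual (hs : -v < s) :
    deriv (deriv (standardizedResidual b v)) s =
      -(s + 3 * b + 4 * v) / (4 * √(s + v) ^ 5) := by
  have hr : 0 < √(s + v) := Real.sqrt_pos.2 (by linarith)
  have hr2 : √(s + v) ^ 2 = s + v := Real.sq_sqrt (by linarith)
  have hderiv : deriv (standardizedResidual b v) =ᶠ[𝓝 s]
      fun s => (s + b + 2 * v) / (2 * √(s + v) ^ 3) := by
    filter_upwards [lt_mem_nhds hs] with y hy using deriv_standardizedResidual hy
  rw [hderiv.deriv_eq]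
  refine ((((hasDerivAt_id' s).add_const b).add_const (2 * v)).div
    (((hasDerivAt_sqrt_add_const hs).fun_pow 3).const_mul 2) (by positivity)).deriv.trans ?_
  field_simp
  rw [hr2]
  push_cast
  linear_combination 8 * (√(s + v) ^ 2 + s + v) * hr2

variable (b v)

theorem tendsto_standardizedResidual_div_sqrt :
    Tendsto (fun s => standardizedResidual b v s / √(s + v)) atTop (𝓝 1) := by
  refine (tendsto_add_div_add_atTop_nhds_one (-b) v).congr' ?_
  filter_upwards [eventually_gt_atTop (-v)] with s hs
  rw [standardizedResidual, div_div, Real.mul_self_sqrt (by linarith), sub_eq_add_neg]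

theorem tendsto_standardizedResidual_atTop :
    Tendsto (standardizedResidual b v) atTop atTop := by
  have hsqrt : Tendsto (fun s => √(s + v)) atTop atTop :=
    Real.tendsto_sqrt_atTop.comp (tendsto_atTop_add_const_right _ v tendsto_id)
  refine (hsqrt.atTop_mul_pos one_pos (tendsto_standardizedResidual_div_sqrt b v)).congr' ?_
  filter_upwards [hsqrt.eventually_ne_atTop 0] with s hs using mul_div_cancel₀ _ hs

theorem tendsto_sqrt_mul_deriv_standardizedResidual :
    Tendsto (fun s => √(s + v) * deriv (standardizedResidual b v) s) atTop (𝓝 (1 / 2)) := by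
  refine ((tendsto_add_div_add_atTop_nhds_one (b + 2 * v) v).div_const 2).congr' ?_
  filter_upwards [eventually_gt_atTop (-v)] with s hs
  have hsv : 0 < s + v := by linarith
  have hr2 : √(s + v) ^ 2 = s + v := Real.sq_sqrt hsv.le
  rw [deriv_standardizedResidual hs]
  field_simp
  rw [hr2]
  ring

theorem tendsto_sqrt_pow_three_mul_deriv_deriv_standardizedResidual :
    Tendsto (fun s => √(s + v) ^ 3 * deriv (deriv (standardizedResidual b v)) s) atTop
      (𝓝 (-1 / 4)) := by
  refine ((tendsto_add_div_add_atTop_nhds_one (3 * b + 4 * v) v).neg.div_const 4).congr' ?_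
  filter_upwards [eventually_gt_atTop (-v)] with s hs
  have hsv : 0 < s + v := by linarith
  have hr2 : √(s + v) ^ 2 = s + v := Real.sq_sqrt hsv.le
  rw [deriv_deriv_standardizedResidual hs]
  field_simp
  rw [hr2]
  ring

end StandardizedResidual

section RobustFidelity

variable {ρ : ℝ → ℝ} {L : ℝ}

theorem eventually_contDiffAt_robustFidelity {n : WithTop ℕ∞}
    (hρ : ∀ᶠ t in atTop, ContDiffAt ℝ n ρ t) (b v : ℝ) :
    ∀ᶠ s in atTop, ContDiffAt ℝ n (robustFidelity ρ b v) s := by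
  filter_upwards [(tendsto_standardizedResidual_atTop b v).eventually hρ,
    eventually_gt_atTop (-v)] with s hρs hs
  exact hρs.comp s (contDiffAt_standardizedResidual hs)

theorem tendsto_sqrt_pow_three_mul_deriv_deriv_robustFidelity
    (hρ : ∀ᶠ t in atTop, ContDiffAt ℝ 2 ρ t) (hρ' : Tendsto (deriv ρ) atTop (𝓝 L))
    (hρ'' : Tendsto (fun t => t * deriv (deriv ρ) t) atTop (𝓝 0)) (b v : ℝ) :
    Tendsto (fun s => √(s + v) ^ 3 * deriv (deriv (robustFidelity ρ b v)) s) atTop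
      (𝓝 (-L / 4)) := by
  have hu := tendsto_standardizedResidual_atTop b v
  have hfirst := ((hρ''.comp hu).div (tendsto_standardizedResidual_div_sqrt b v) one_ne_zero).mul
    ((tendsto_sqrt_mul_deriv_standardizedResidual b v).pow 2)
  have hsecond :=
    (hρ'.comp hu).mul (tendsto_sqrt_pow_three_mul_deriv_deriv_standardizedResidual b v)
  have hsum := hfirst.add hsecond
  rw [show 0 / 1 * (1 / 2 : ℝ) ^ 2 + L * (-1 / 4) = -L / 4 by ring] at hsum
  refine hsum.congr' ?_
  filter_upwards [hu.eventually hρ, hu.eventually_ne_atTop 0, eventually_gt_atTop (-v)]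
    with s hρs hus hs
  have hr : 0 < √(s + v) := Real.sqrt_pos.2 (by linarith)
  rw [robustFidelity, deriv_deriv_comp hρs (contDiffAt_standardizedResidual hs)]
  simp only [Pi.div_apply, Function.comp_apply]
  field_simp

theorem eventually_deriv_deriv_robustFidelity_neg (hL : 0 < L)
    (hρ : ∀ᶠ t in atTop, ContDiffAt ℝ 2 ρ t) (hρ' : Tendsto (deriv ρ) atTop (𝓝 L))
    (hρ'' : Tendsto (fun t => t * deriv (deriv ρ) t) atTop (𝓝 0)) (b v : ℝ) :
    ∀ᶠ s in atTop, deriv (deriv (robustFidelity ρ b v)) s < 0 := by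
  have hlim := tendsto_sqrt_pow_three_mul_deriv_deriv_robustFidelity hρ hρ' hρ'' b v
  filter_upwards [hlim.eventually_lt_const (by linarith : -L / 4 < 0)] with s hs
  exact neg_of_mul_neg_right hs (by positivity)

end RobustFidelity

section LogisticLoss

theorem one_sub_exp_neg_le_tanh (x : ℝ) : 1 - Real.exp (-x) ≤ Real.tanh x := by
  rw [Real.tanh_eq_sinh_div_cosh, le_div_iff₀ (Real.cosh_pos x)]
  nlinarith [Real.cosh_sub_sinh x, Real.one_le_cosh x, Real.exp_pos (-x)]

theorem tendsto_tanh_atTop : Tendsto Real.tanh atTop (𝓝 1) := by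
  have hlower : Tendsto (fun x => 1 - Real.exp (-x)) atTop (𝓝 (1 - 0)) :=
    tendsto_const_nhds.sub Real.tendsto_exp_neg_atTop_nhds_zero
  rw [sub_zero] at hlower
  exact tendsto_of_tendsto_of_tendsto_of_le_of_le hlower tendsto_const_nhds
    one_sub_exp_neg_le_tanh fun x => (Real.tanh_lt_one x).le

theorem tendsto_div_cosh_sq_atTop : Tendsto (fun x => x / Real.cosh x ^ 2) atTop (𝓝 0) := by
  refine tendsto_of_tendsto_of_tendsto_of_le_of_le' tendsto_const_nhds tendsto_inv_atTop_zero ?_ ?_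
  · filter_upwards [eventually_ge_atTop 0] with x hx using by positivity
  · filter_upwards [eventually_gt_atTop 0] with x hx
    have hx_le : x ≤ Real.cosh x := (Real.self_le_sinh_iff.2 hx.le).trans (Real.sinh_lt_cosh x).le
    calc x / Real.cosh x ^ 2 ≤ x / x ^ 2 := by gcongr
      _ = x⁻¹ := by field_simp

theorem hasDerivAt_tanh (x : ℝ) : HasDerivAt Real.tanh (1 / Real.cosh x ^ 2) x := by
  have hquot := (Real.hasDerivAt_sinh x).div (Real.hasDerivAt_cosh x) (Real.cosh_pos x).ne'
  rw [← sq, ← sq, Real.cosh_sq_sub_sinh_sq] at hquot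
  exact hquot.congr_of_eventuallyEq (.of_forall Real.tanh_eq_sinh_div_cosh)

theorem contDiff_logisticLoss {n : WithTop ℕ∞} (β : ℝ) : ContDiff ℝ n (logisticLoss β) :=
  contDiff_const.mul ((contDiff_id.div_const β).cosh.log fun _ => (Real.cosh_pos _).ne')

variable {β : ℝ}

theorem deriv_logisticLoss (hβ : β ≠ 0) :
    deriv (logisticLoss β) = fun t => β * Real.tanh (t / β) := by
  ext t
  refine (((((hasDerivAt_id' t).div_const β).cosh).log
    (Real.cosh_pos _).ne').const_mul (β ^ 2)).deriv.trans ?_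
  rw [Real.tanh_eq_sinh_div_cosh]
  field_simp

theorem deriv_deriv_logisticLoss (hβ : β ≠ 0) :
    deriv (deriv (logisticLoss β)) = fun t => 1 / Real.cosh (t / β) ^ 2 := by
  ext t
  rw [deriv_logisticLoss hβ]
  refine (((hasDerivAt_tanh (t / β)).comp t
    ((hasDerivAt_id' t).div_const β)).const_mul β).deriv.trans ?_
  field_simp

theorem tendsto_deriv_logisticLoss_atTop (hβ : 0 < β) :
    Tendsto (deriv (logisticLoss β)) atTop (𝓝 β) := by
  rw [deriv_logisticLoss hβ.ne']
  simpa only [mul_one, Function.comp_def, id_eq] using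
    (tendsto_tanh_atTop.comp (tendsto_id.atTop_div_const hβ)).const_mul β

theorem tendsto_mul_deriv_deriv_logisticLoss_atTop (hβ : 0 < β) :
    Tendsto (fun t => t * deriv (deriv (logisticLoss β)) t) atTop (𝓝 0) := by
  rw [deriv_deriv_logisticLoss hβ.ne']
  have hscaled := (tendsto_div_cosh_sq_atTop.comp (tendsto_id.atTop_div_const hβ)).const_mul β
  rw [mul_zero] at hscaled
  refine hscaled.congr fun t => ?_
  simp only [Function.comp_apply, id_eq]
  field_simp

end LogisticLoss

theorem logistic_fidelity_eventually_nonconvex_general {ρ : ℝ → ℝ} {L : ℝ} (hL : 0 < L)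
    (hρ : ∀ᶠ t in atTop, ContDiffAt ℝ 2 ρ t) (hρ' : Tendsto (deriv ρ) atTop (𝓝 L))
    (hρ'' : Tendsto (fun t => t * deriv (deriv ρ) t) atTop (𝓝 0)) (b v : ℝ) :
    ∃ S : ℝ,
      (∀ s > S, DifferentiableAt ℝ (deriv (robustFidelity ρ b v)) s ∧
        deriv (deriv (robustFidelity ρ b v)) s < 0) ∧
      ∀ S' ≥ S, ¬ ConvexOn ℝ (Ioi S') (robustFidelity ρ b v) := by
  obtain ⟨S, hS⟩ := eventually_atTop.1
    ((eventually_contDiffAt_robustFidelity hρ b v).and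
      (eventually_deriv_deriv_robustFidelity_neg hL hρ hρ' hρ'' b v))
  refine ⟨S, fun s hs => ?_, fun S' hS' hconvex => ?_⟩
  · have hneg := (hS s hs.le).2
    exact ⟨differentiableAt_of_deriv_ne_zero hneg.ne, hneg⟩
  · obtain ⟨hsmooth, hneg⟩ := hS (S' + 1) (by linarith)
    have hdiff : ∀ᶠ s in 𝓝 (S' + 1), DifferentiableAt ℝ (robustFidelity ρ b v) s :=
      (hsmooth.eventually (by decide)).mono fun s hs => hs.differentiableAt two_ne_zero
    exact hneg.not_ge (deriv_deriv_nonneg_of_convexOn hconvex (Ioi_mem_nhds (lt_add_one S')) hdiff)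

/-- The logistic loss ρ(t) = β² log(cosh(t/β)) yields a robust scalar fidelity
ψ(s) = ρ((s − b)/√(s + σ²)) whose second derivative is negative for all sufficiently large
s; in particular ψ is not convex on any interval of the form (S, ∞). -/
theorem logistic_fidelity_eventually_nonconvex
    (β : ℝ) (hβ : 0 < β) (b σ : ℝ) (hb : 0 ≤ b) :
    ∃ S : ℝ,
      (∀ s > S,
        DifferentiableAt ℝ
          (deriv (fun s : ℝ =>
            β ^ 2 * Real.log (Real.cosh ((s - b) / Real.sqrt (s + σ ^ 2) / β)))) s ∧
        deriv (deriv (fun s : ℝ =>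
            β ^ 2 * Real.log (Real.cosh ((s - b) / Real.sqrt (s + σ ^ 2) / β)))) s < 0) ∧
      (∀ S' ≥ S, ¬ ConvexOn ℝ (Set.Ioi S')
        (fun s : ℝ =>
          β ^ 2 * Real.log (Real.cosh ((s - b) / Real.sqrt (s + σ ^ 2) / β)))) :=
  logistic_fidelity_eventually_nonconvex_general hβ
    (.of_forall fun _ => (contDiff_logisticLoss β).contDiffAt)
    (tendsto_deriv_logisticLoss_atTop hβ) (tendsto_mul_deriv_deriv_logisticLoss_atTop hβ) b (σ ^ 2)
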